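/- Uniqueness of midsound: if m and m' are both midsounds of the interval [a,b] — that is, C a m m b and C a m' m' b — then m ∼ m'. -/

import Mathlib

/-- `x` is identical-pitched with `y`: neither is lower-pitched than the other. -/
def Ident {S : Type*} (L : S → S → Prop) (x y : S) : Prop := ¬ L x y ∧ ¬ L y x

/-!
Suppose `m` and `m'` are midsounds of `[a, b]` and `m` is lower than `m'`, with `m'` lower than `b`.
Lay off from `m'` an interval `[m', q]` congruent to `[m, m']`. Since `[m', b]` is congruent to
`[a, m']`, addition with the two copies in swapped order gives that `[m, b]`, and hence `[a, m]`, is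
congruent to `[a, q]`. So `q` is identical-pitched with `m`, although `m`, `m'`, `q` ascend.
If `m'` is lower than `a`, reversing both bisections reduces to this case; and if `m'` is
identical-pitched with `a`, it is so with `b` too, and `m` would lie strictly below both ends.
-/

section PitchOrder

variable {S : Type*} {L : S → S → Prop}

theorem isStrictWeakOrder_of_separation (irrefl : ∀ x, ¬ L x x)
    (trans : ∀ x y z, L x y → L y z → L x z)
    (separation : ∀ x y z, L x y → ¬ (Ident L x z ∧ Ident L y z)) : IsStrictWeakOrder S L where
  irrefl := irrefl
  trans := trans
  incomp_trans x y z hxy hyz :=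
    ⟨fun hxz ↦ separation x z y hxz ⟨hxy, hyz.symm⟩,
      fun hzx ↦ separation z x y hzx ⟨hyz.symm, hxy⟩⟩

theorem Ident.refl [Std.Irrefl L] (x : S) : Ident L x x := ⟨irrefl x, irrefl x⟩

theorem Ident.symm {x y : S} (h : Ident L x y) : Ident L y x := And.symm h

variable [IsStrictWeakOrder S L]

theorem Ident.trans {x y z : S} (hxy : Ident L x y) (hyz : Ident L y z) : Ident L x z :=
  IsStrictWeakOrder.incomp_trans x y z hxy hyz

theorem rel_of_rel_of_ident {x y z : S} (hxy : L x y) (hyz : Ident L y z) : L x z := by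
  by_contra hxz
  by_cases hzx : L z x
  · exact hyz.2 (_root_.trans hzx hxy)
  · have hxz_ident : Ident L x z := ⟨hxz, hzx⟩
    exact (hxz_ident.trans hyz.symm).1 hxy

end PitchOrder

/-- Congruence of (directed) intervals over the pitch relation `L`, where `C a b c d` says that
`[a, b]` is congruent to `[c, d]`. Addition is stated with the copies of two adjacent ascending
intervals laid off in swapped order. -/
structure IsIntervalCongruence {S : Type*} (L : S → S → Prop) (C : S → S → S → S → Prop) :
    Prop where
  of_ident {a a' b b' : S} : Ident L a a' → Ident L b b' → C a b a' b'
  trans {a b c d e f : S} : C a b c d → C c d e f → C a b e f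
  motion (x y a : S) : ∃ b, C x y a b ∧ ∀ b', C x y a b' → Ident L b b'
  rel_of_rel {a b c d : S} : L a b → C a b c d → L c d
  reverse_iff {a b c d : S} : L a b → (C a b c d ↔ C b a d c)
  add_swap {a b c a' b' c' : S} :
    L a b → L b c → C a b b' a' → C b c c' b' → C a c c' a'

/-- `m` is a midsound of the interval `[a, b]`: it splits it into congruent halves. -/
def IsMidsound {S : Type*} (C : S → S → S → S → Prop) (a b m : S) : Prop := C a m m b

section Midsound

variable {S : Type*} {L : S → S → Prop} {C : S → S → S → S → Prop} [IsStrictWeakOrder S L]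

namespace IsIntervalCongruence

theorem endpoint_unique (hC : IsIntervalCongruence L C) {x y a b b' : S} (h : C x y a b)
    (h' : C x y a b') : Ident L b b' := by
  obtain ⟨e, -, he⟩ := hC.motion x y a
  exact (he b h).symm.trans (he b' h')

theorem symm (hC : IsIntervalCongruence L C) {a b c d : S} (h : C a b c d) : C c d a b := by
  obtain ⟨e, he, -⟩ := hC.motion c d a
  have hbe : Ident L b e :=
    hC.endpoint_unique (hC.of_ident (.refl a) (.refl b)) (hC.trans h he)
  exact hC.trans he (hC.of_ident (.refl a) hbe.symm)

theorem rel_iff (hC : IsIntervalCongruence L C) {a b c d : S} (h : C a b c d) : L a b ↔ L c d :=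
  ⟨fun hab ↦ hC.rel_of_rel hab h, fun hcd ↦ hC.rel_of_rel hcd (hC.symm h)⟩

theorem rel_swap_iff (hC : IsIntervalCongruence L C) {a b c d : S} (h : C a b c d) :
    L b a ↔ L d c :=
  ⟨fun hba ↦ hC.rel_of_rel hba ((hC.reverse_iff hba).2 h),
    fun hdc ↦ hC.rel_of_rel hdc ((hC.reverse_iff hdc).2 (hC.symm h))⟩

end IsIntervalCongruence

namespace IsMidsound

variable {a b m m' : S}

theorem swap_of_rel (hC : IsIntervalCongruence L C) (hm : IsMidsound C a b m) (hma : L m a) :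
    IsMidsound C b a m :=
  hC.symm ((hC.reverse_iff hma).2 hm)

theorem not_rel_of_rel_right (hC : IsIntervalCongruence L C) (hm : IsMidsound C a b m)
    (hm' : IsMidsound C a b m') (hm'b : L m' b) : ¬ L m m' := by
  intro hmm'
  obtain ⟨q, hq, -⟩ := hC.motion m m' m'
  have hm'q : L m' q := hC.rel_of_rel hmm' hq
  have hmb : C m b a q := hC.add_swap hmm' hm'b hq (hC.symm hm')
  have hmq : Ident L m q := hC.endpoint_unique (hC.symm hm) hmb
  exact hmq.1 (_root_.trans hmm' hm'q)

theorem not_rel_of_ident_left (hC : IsIntervalCongruence L C) (hm : IsMidsound C a b m)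
    (hm' : IsMidsound C a b m') (ham' : Ident L a m') : ¬ L m m' := by
  intro hmm'
  have hm'b : Ident L m' b :=
    ⟨mt (hC.rel_iff hm').2 ham'.1, mt (hC.rel_swap_iff hm').2 ham'.2⟩
  have hma : L m a := rel_of_rel_of_ident hmm' ham'.symm
  have hmb : L m b := rel_of_rel_of_ident hmm' hm'b
  have hbm : L b m := (hC.rel_swap_iff hm).1 hma
  exact asymm hmb hbm

theorem not_rel (hC : IsIntervalCongruence L C) (hm : IsMidsound C a b m)
    (hm' : IsMidsound C a b m') : ¬ L m m' := by
  intro hmm'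
  by_cases ham' : L a m'
  · exact hm.not_rel_of_rel_right hC hm' ((hC.rel_iff hm').1 ham') hmm'
  by_cases hm'a : L m' a
  · have hma : L m a := _root_.trans hmm' hm'a
    exact (hm.swap_of_rel hC hma).not_rel_of_rel_right hC (hm'.swap_of_rel hC hm'a) hm'a hmm'
  · exact hm.not_rel_of_ident_left hC hm' ⟨ham', hm'a⟩ hmm'

end IsMidsound

theorem stmt_8_general (hC : IsIntervalCongruence L C) {a b m m' : S} (hm : IsMidsound C a b m)
    (hm' : IsMidsound C a b m') : Ident L m m' :=
  ⟨hm.not_rel hC hm', hm'.not_rel hC hm⟩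

end Midsound

theorem stmt_8 {S : Type*} (L : S → S → Prop) (C : S → S → S → S → Prop)
    (A1 : ∀ x : S, ¬ L x x)
    (A2 : ∀ x y z : S, L x y → L y z → L x z)
    (A3 : ∃ x y : S, L x y)
    (A4 : ∀ x y z : S, L x y → ¬ (Ident L x z ∧ Ident L y z))
    (A5a : ∀ x : S, ∃ a b : S, L a x ∧ L x b)
    (A5b : ∀ x y : S, L x y → ∃ a : S, L x a ∧ L a y)
    (C1 : ∀ a a' b b' : S, Ident L a a' → Ident L b b' → C a b a' b')
    (C2 : ∀ a b c d e f : S, C a b c d → C c d e f → C a b e f)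
    (C3 : ∀ x y a : S, ∃ b : S, C x y a b ∧ ∀ b' : S, C x y a b' → Ident L b b')
    (C4a : ∀ a b c d : S, L a b → C a b c d → L c d)
    (C4b : ∀ a b c d : S, L a b → (C a b c d ↔ C b a d c))
    (C5a : ∀ a b c a' b' c' : S, L a b → L b c → C a b a' b' → C b c b' c' → C a c a' c')
    (C5b : ∀ a b c a' b' c' : S, L a b → L b c → C a b b' a' → C b c c' b' → C a c c' a') :
    ∀ a b m m' : S, C a m m b → C a m' m' b → Ident L m m' := by
  have : IsStrictWeakOrder S L := isStrictWeakOrder_of_separation A1 A2 A4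
  have hC : IsIntervalCongruence L C :=
    ⟨C1 _ _ _ _, C2 _ _ _ _ _ _, C3, C4a _ _ _ _, C4b _ _ _ _, C5b _ _ _ _ _ _⟩
  exact fun _ _ _ _ ↦ stmt_8_general hC
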